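/- arXiv:1508.06015 — 3 statements merged into one kernel-verified Lean document; each statement's English description precedes it below -/
import Mathlib

section
/- Let R be a d-dimensional normal local domain (residue field possibly finite) and I a normal M-primary ideal. For every r ≥ 1 there exist s ≥ 1 and elements x₁,…,x_d ∈ I^{rs} such that for every t ≥ 1 the ideal (x₁ᵗ,…,x_dᵗ)R is a reduction of I^{rst}. -/
def Ideal.IsIntegrallyClosedIdeal {R : Type*} [CommRing R] (J : Ideal R) : Prop :=
  ∀ r : R,
    (∃ n : ℕ, 0 < n ∧ ∃ a : ℕ → R,
        (∀ i, 1 ≤ i → i ≤ n → a i ∈ J ^ i) ∧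
        r ^ n + ∑ i ∈ Finset.Icc 1 n, a i * r ^ (n - i) = 0) →
    r ∈ J

def Ideal.IsNormalIdeal {R : Type*} [CommRing R] (J : Ideal R) : Prop :=
  ∀ n : ℕ, 1 ≤ n → (J ^ n).IsIntegrallyClosedIdeal

/-- `J` is a reduction of `I` if `J ≤ I` and `I^{n+1} = J·Iⁿ` for some `n`. -/
def Ideal.IsReductionOf {R : Type*} [CommRing R] (J I : Ideal R) : Prop :=
  J ≤ I ∧ ∃ n : ℕ, I ^ (n + 1) = J * I ^ n

/-!
Write `I = (a_i | i ∈ σ)` and present the Rees algebra `R[IT]` as the quotient of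
`S = R[X_i | i ∈ σ]` by the kernel `K` of `X_i ↦ a_i T`. A prime `Q` of `S` that contains `M S + K`
but not all of the variables has height at least `|σ|`: it strictly contains a prime
`ker (S → (R/p)[T])` with `a_i ∉ p` for some `i`, and this kernel has height at least `|σ| - 1`,
because the `X_j` can be evaluated one after the other. As `dim S = |σ| + d`, choosing `d`
homogeneous elements of positive degree by prime avoidance, and raising them to powers, gives
`f_1, …, f_d` of a common degree `s` such that some power of `(X_i | i ∈ σ)` lies in
`M S + K + (f_1, …, f_d)`. Avoidance by forms of high degree needs no infinite residue field, at the
price of a possibly large `s`. Applying `S → R[T]` and comparing coefficients of a high power of `T`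
gives `I^(s(k+1)) ≤ (x_1, …, x_d) I^(sk) + M I^(s(k+1))` with `x_j = f_j(a)`, and Nakayama's lemma
shows that `(x_1, …, x_d)` is a reduction of `I^s`. Replacing the `f_j` by their `t`-th powers does
not change the radical, so the same argument applies to the `x_j ^ t`.
-/

section GradedRing

open DirectSum
open scoped HomogeneousIdeal

variable {A S : Type*} [CommRing A] [SetLike S A] [AddSubmonoidClass S A] {𝒜 : ℕ → S}
  [GradedRing 𝒜]

theorem exists_homogeneous_mem_notMem {I J : Ideal A} (hI : I.IsHomogeneous 𝒜) (hIJ : ¬ I ≤ J) :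
    ∃ n, ∃ a ∈ 𝒜 n, a ∈ I ∧ a ∉ J := by
  classical
  contrapose! hIJ
  intro a ha
  rw [← sum_support_decompose 𝒜 a]
  exact sum_mem fun n _ ↦ hIJ n _ (SetLike.coe_mem _) (hI n ha)

theorem exists_pos_homogeneous_mem_notMem {I P : Ideal A} (hI : I.IsHomogeneous 𝒜)
    (hP : P.IsPrime) (hIP : ¬ I ≤ P) (hirr : ¬ 𝒜₊.toIdeal ≤ P) :
    ∃ n, 0 < n ∧ ∃ a ∈ 𝒜 n, a ∈ I ∧ a ∉ P := by
  obtain ⟨n, a, han, ⟨hairr, haI⟩, haP⟩ := exists_homogeneous_mem_notMem (𝒜 := 𝒜)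
    (𝒜₊.isHomogeneous.inf hI) (mt hP.inf_le.mp (not_or.mpr ⟨hirr, hIP⟩))
  refine ⟨n, Nat.pos_of_ne_zero ?_, a, han, haI, haP⟩
  rintro rfl
  have ha0 : a = 0 := by
    rw [← decompose_of_mem_same 𝒜 han]
    exact hairr
  exact haP (ha0 ▸ P.zero_mem)

theorem exists_homogeneous_forall_notMem_of_isPrime (T : Finset (Ideal A))
    (hprime : ∀ P ∈ T, P.IsPrime) (hhom : ∀ P ∈ T, P.IsHomogeneous 𝒜)
    (hirr : ∀ P ∈ T, ¬ 𝒜₊.toIdeal ≤ P) :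
    ∃ n, 0 < n ∧ ∃ a ∈ 𝒜 n, ∀ P ∈ T, a ∉ P := by
  classical
  induction T using Finset.strongInduction with
  | H T ih =>
  obtain rfl | hT := T.eq_empty_or_nonempty
  · exact ⟨1, one_pos, 0, zero_mem _, by simp⟩
  obtain ⟨Q, hQT, hQmin⟩ := T.exists_minimal hT
  have hQ := hprime Q hQT
  obtain ⟨m, hm, a, ham, ha⟩ := ih (T.erase Q) (Finset.erase_ssubset hQT)
    (fun P hP ↦ hprime P (Finset.mem_of_mem_erase hP))
    (fun P hP ↦ hhom P (Finset.mem_of_mem_erase hP))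
    (fun P hP ↦ hirr P (Finset.mem_of_mem_erase hP))
  by_cases haQ : a ∉ Q
  · refine ⟨m, hm, a, ham, fun P hP ↦ ?_⟩
    obtain rfl | hPQ := eq_or_ne P Q
    exacts [haQ, ha P (Finset.mem_erase.mpr ⟨hPQ, hP⟩)]
  rw [not_not] at haQ
  have hinf : ¬ ⨅ P ∈ T.erase Q, P ≤ Q := by
    rw [← Finset.inf_eq_iInf, hQ.inf_le']
    rintro ⟨P, hP, hPQ⟩
    obtain ⟨hne, hPT⟩ := Finset.mem_erase.mp hP
    exact hne (hPQ.antisymm (hQmin hPT hPQ))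
  obtain ⟨n, hn, b, hbn, hb, hbQ⟩ := exists_pos_homogeneous_mem_notMem
    (Ideal.IsHomogeneous.iInf₂ fun P hP ↦ hhom P (Finset.mem_of_mem_erase hP)) hQ hinf
    (hirr Q hQT)
  simp only [Submodule.mem_iInf] at hb
  -- `a` lies in no element of `T` other than `Q`, and `b` lies in all of them except `Q`.
  refine ⟨n * m, by positivity, a ^ n + b ^ m,
    add_mem (SetLike.pow_mem_graded n ham) (mul_comm n m ▸ SetLike.pow_mem_graded m hbn),
    fun P hP habP ↦ ?_⟩
  have := hprime P hP
  obtain rfl | hPQ := eq_or_ne P Q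
  · have hbm := (P.add_mem_iff_right (P.pow_mem_of_mem haQ n hn)).mp habP
    exact hbQ (hQ.mem_of_pow_mem m hbm)
  · have hPmem := Finset.mem_erase.mpr ⟨hPQ, hP⟩
    have han := (P.add_mem_iff_left (P.pow_mem_of_mem (hb P hPmem) m hm)).mp habP
    exact ha P hPmem (this.mem_of_pow_mem n han)

theorem isHomogeneous_of_mem_minimalPrimes {I P : Ideal A} (hI : I.IsHomogeneous 𝒜)
    (hP : P ∈ I.minimalPrimes) : P.IsHomogeneous 𝒜 := by
  have hle := P.toIdeal_homogeneousCore_le 𝒜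
  have hIcore : I ≤ (P.homogeneousCore 𝒜).toIdeal :=
    hI.toIdeal_homogeneousCore_eq_self.ge.trans (Ideal.homogeneousCore_mono 𝒜 hP.1.2)
  rw [Ideal.IsHomogeneous.iff_eq]
  exact hle.antisymm (hP.2 ⟨hP.1.1.homogeneousCore, hIcore⟩ hle)

theorem isHomogeneous_span_range_of_mem {ι : Type*} {f : ι → A} {m : ι → ℕ}
    (hf : ∀ j, f j ∈ 𝒜 (m j)) : (Ideal.span (Set.range f)).IsHomogeneous 𝒜 :=
  Ideal.homogeneous_span 𝒜 _ (by rintro _ ⟨j, rfl⟩; exact ⟨m j, hf j⟩)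

theorem height_add_one_le_ringKrullDim_of_isHomogeneous {P : Ideal A} [P.IsPrime]
    (hP : P.IsHomogeneous 𝒜) (hirr : ¬ 𝒜₊.toIdeal ≤ P) :
    ((P.height + 1 : ℕ∞) : WithBot ℕ∞) ≤ ringKrullDim A := by
  have hproper : P ⊔ 𝒜₊.toIdeal ≠ ⊤ := by
    rw [Ne, Ideal.eq_top_iff_one, Submodule.mem_sup]
    rintro ⟨p, hp, a, ha, hpa⟩
    have hp0 := hP 0 hp
    have hone : (decompose 𝒜 p 0 : A) = 1 := by
      rw [← decompose_of_mem_same 𝒜 (SetLike.GradedOne.one_mem (A := 𝒜)), ← hpa,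
        decompose_add, DirectSum.add_apply]
      simpa using ha
    exact Ideal.IsPrime.ne_top' (P.eq_top_of_isUnit_mem hp0 (hone ▸ isUnit_one))
  obtain ⟨N, hN, hle⟩ := Ideal.exists_le_maximal _ hproper
  have hlt : P < N := lt_of_le_of_ne (le_sup_left.trans hle)
    fun h ↦ hirr (h ▸ le_sup_right.trans hle)
  calc ((P.height + 1 : ℕ∞) : WithBot ℕ∞) ≤ (N.height : WithBot ℕ∞) := by
        exact_mod_cast Ideal.height_add_one_le_of_lt_of_isPrime hlt
    _ ≤ ringKrullDim A := Ideal.height_le_ringKrullDim_of_isPrime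

/-- Prime avoidance by homogeneous elements says nothing about the primes containing `𝒜₊`, so only
those outside `V(𝒜₊)`, the points of `Proj`, are considered. -/
theorem exists_homogeneous_add_le_height [IsNoetherianRing A] {I : Ideal A}
    (hI : I.IsHomogeneous 𝒜) {n : ℕ∞}
    (hn : ∀ Q : Ideal A, Q.IsPrime → I ≤ Q → ¬ 𝒜₊.toIdeal ≤ Q → n ≤ Q.height) (k : ℕ) :
    ∃ (f : Fin k → A) (m : Fin k → ℕ), (∀ j, 0 < m j ∧ f j ∈ 𝒜 (m j)) ∧
      ∀ Q : Ideal A, Q.IsPrime → I ⊔ Ideal.span (Set.range f) ≤ Q → ¬ 𝒜₊.toIdeal ≤ Q →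
        n + k ≤ Q.height := by
  classical
  induction k with
  | zero =>
    refine ⟨Fin.elim0, Fin.elim0, fun j ↦ j.elim0, fun Q hQ hle hirr ↦ ?_⟩
    simpa using hn Q hQ (le_sup_left.trans hle) hirr
  | succ k ih =>
    obtain ⟨f, m, hfm, hf⟩ := ih
    set J := I ⊔ Ideal.span (Set.range f) with hJ
    have hJhom : J.IsHomogeneous 𝒜 := hI.sup (isHomogeneous_span_range_of_mem fun j ↦ (hfm j).2)
    have hfin := J.finite_minimalPrimes_of_isNoetherianRing
    obtain ⟨e, he, g, hge, hg⟩ := exists_homogeneous_forall_notMem_of_isPrime (𝒜 := 𝒜)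
      (hfin.subset (Set.sep_subset _ fun P ↦ ¬ 𝒜₊.toIdeal ≤ P)).toFinset
      (fun P hP ↦ ((Set.Finite.mem_toFinset _).mp hP).1.1.1)
      (fun P hP ↦ isHomogeneous_of_mem_minimalPrimes hJhom ((Set.Finite.mem_toFinset _).mp hP).1)
      (fun P hP ↦ ((Set.Finite.mem_toFinset _).mp hP).2)
    refine ⟨Fin.snoc f g, Fin.snoc m e, Fin.lastCases (by simpa using ⟨he, hge⟩) (by simpa),
      fun Q hQ hle hirr ↦ ?_⟩
    rw [Fin.range_snoc, Ideal.span_insert, sup_left_comm, ← hJ, sup_le_iff,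
      Ideal.span_singleton_le_iff_mem] at hle
    obtain ⟨P, hP, hPQ⟩ := Ideal.exists_minimalPrimes_le hle.2
    have : P.IsPrime := hP.1.1
    have hPirr : ¬ 𝒜₊.toIdeal ≤ P := fun h ↦ hirr (h.trans hPQ)
    have hlt : P < Q := lt_of_le_of_ne hPQ fun h ↦
      hg P ((Set.Finite.mem_toFinset _).mpr ⟨hP, hPirr⟩) (h ▸ hle.1)
    calc n + (k + 1 : ℕ) = n + k + 1 := by push_cast; ring
      _ ≤ P.height + 1 := by gcongr; exact hf P this hP.1.2 hPirr
      _ ≤ Q.height := Ideal.height_add_one_le_of_lt_of_isPrime hlt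

theorem exists_homogeneous_irrelevant_le_radical [IsNoetherianRing A] {I : Ideal A}
    (hI : I.IsHomogeneous 𝒜) {n d : ℕ} (hdim : ringKrullDim A ≤ (n + d : ℕ))
    (hn : ∀ Q : Ideal A, Q.IsPrime → I ≤ Q → ¬ 𝒜₊.toIdeal ≤ Q → (n : ℕ∞) ≤ Q.height) :
    ∃ s, 0 < s ∧ ∃ f : Fin d → A, (∀ j, f j ∈ 𝒜 s) ∧
      𝒜₊.toIdeal ≤ (I ⊔ Ideal.span (Set.range f)).radical := by
  obtain ⟨g, m, hgm, hg⟩ := exists_homogeneous_add_le_height hI hn d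
  have hIg : (I ⊔ Ideal.span (Set.range g)).IsHomogeneous 𝒜 :=
    hI.sup (isHomogeneous_span_range_of_mem fun j ↦ (hgm j).2)
  have hrad : 𝒜₊.toIdeal ≤ (I ⊔ Ideal.span (Set.range g)).radical := by
    rw [← Ideal.sInf_minimalPrimes]
    refine le_sInf fun Q hQ ↦ ?_
    by_contra hirr
    have : Q.IsPrime := hQ.1.1
    have hle := (height_add_one_le_ringKrullDim_of_isHomogeneous
      (isHomogeneous_of_mem_minimalPrimes hIg hQ) hirr).trans hdim
    have hle' : Q.height + 1 ≤ (n + d : ℕ) := by exact_mod_cast hle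
    have hlt : ((n + d : ℕ) : ℕ∞) + 1 ≤ (n + d : ℕ) :=
      le_trans (by gcongr; exact_mod_cast hg Q this hQ.1.2 hirr) hle'
    exact (n + d).not_succ_le_self (by exact_mod_cast hlt)
  -- Powers bring the degrees to a common value without changing the radical.
  have hdvd (j) : m j ∣ ∏ i, m i := Finset.dvd_prod_of_mem m (Finset.mem_univ j)
  refine ⟨∏ i, m i, Finset.prod_pos fun j _ ↦ (hgm j).1, fun j ↦ g j ^ ((∏ i, m i) / m j),
    fun j ↦ ?_, hrad.trans (Ideal.radical_le_radical_iff.mpr (sup_le ?_ ?_))⟩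
  · simpa [Nat.div_mul_cancel (hdvd j)] using
      SetLike.pow_mem_graded ((∏ i, m i) / m j) (hgm j).2
  · exact le_sup_left.trans Ideal.le_radical
  · rw [Ideal.span_le]
    rintro _ ⟨j, rfl⟩
    exact ⟨_, Ideal.mem_sup_right (Ideal.subset_span ⟨j, rfl⟩)⟩

end GradedRing

section PartialEvaluation

open MvPolynomial

variable {σ R A : Type*} [CommRing R] [CommRing A] [Algebra R A]

open Classical in
/-- The partial evaluation of `φ : R[X_i | i ∈ σ] → A` at the variables in `s`: it applies `φ` to
these variables and leaves the other ones in place. Its kernels interpolate between `ker φ` and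
the kernel of the base change `R[X_i | i ∈ σ] → A[X_i | i ∈ σ]`. -/
noncomputable def partialEval (φ : MvPolynomial σ R →ₐ[R] A) (s : Set σ) :
    MvPolynomial σ R →ₐ[R] MvPolynomial σ A :=
  aeval fun i ↦ if i ∈ s then C (φ (X i)) else X i

variable (φ : MvPolynomial σ R →ₐ[R] A) {s t : Set σ} {i : σ}

theorem partialEval_X_of_mem (hi : i ∈ s) : partialEval φ s (X i) = C (φ (X i)) := by
  simp [partialEval, hi]

theorem partialEval_X_of_notMem (hi : i ∉ s) : partialEval φ s (X i) = X i := by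
  simp [partialEval, hi]

theorem partialEval_C (r : R) : partialEval φ s (C r) = C (algebraMap R A r) := by
  rw [← algebraMap_eq, AlgHom.commutes]
  rfl

theorem ker_partialEval_univ : RingHom.ker (partialEval φ Set.univ) = RingHom.ker φ := by
  have hφ : partialEval φ Set.univ =
      ((Algebra.ofId A (MvPolynomial σ A)).restrictScalars R).comp φ := by
    ext1 i
    rw [partialEval_X_of_mem φ (Set.mem_univ i)]
    rfl
  ext p
  rw [RingHom.mem_ker, RingHom.mem_ker, hφ]
  exact map_eq_zero_iff (C (σ := σ)) (C_injective σ A)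

theorem ker_partialEval_mono (hst : s ⊆ t) :
    RingHom.ker (partialEval φ s) ≤ RingHom.ker (partialEval φ t) := by
  classical
  have hφ : partialEval φ t = ((aeval fun i ↦ if i ∈ t then C (φ (X i)) else X i :
      MvPolynomial σ A →ₐ[A] MvPolynomial σ A).restrictScalars R).comp (partialEval φ s) := by
    ext1 i
    by_cases hs : i ∈ s
    · simp [partialEval, hs, hst hs]
    · simp [partialEval, hs]
  intro p hp
  rw [RingHom.mem_ker] at hp ⊢
  rw [hφ, AlgHom.comp_apply, hp, map_zero]

variable {i₀ : σ} {c : R} {e : σ → R}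

theorem ker_partialEval_lt_insert [Nontrivial A] (hc : algebraMap R A c ≠ 0)
    (hi : algebraMap R A c * φ (X i) = algebraMap R A (e i) * φ (X i₀)) (his : i ∉ s)
    (hi₀ : i₀ ∈ s) :
    RingHom.ker (partialEval φ s) < RingHom.ker (partialEval φ (insert i s)) := by
  refine SetLike.lt_iff_le_and_exists.mpr ⟨ker_partialEval_mono φ (Set.subset_insert i s),
    C c * X i - C (e i) * X i₀, ?_, fun h ↦ hc ?_⟩
  · rw [RingHom.mem_ker, map_sub, map_mul, map_mul, partialEval_C, partialEval_C,
      partialEval_X_of_mem φ (Set.mem_insert i s),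
      partialEval_X_of_mem φ (Set.mem_insert_of_mem i hi₀), ← C_mul, ← C_mul, hi, sub_self]
  · rw [RingHom.mem_ker, map_sub, map_mul, map_mul, partialEval_C, partialEval_C,
      partialEval_X_of_notMem φ his, partialEval_X_of_mem φ hi₀, ← C_mul] at h
    classical
    simpa [coeff_C, eq_comm (a := (0 : σ →₀ ℕ))] using congr(coeff (Finsupp.single i 1) $h)

theorem card_le_height_ker_add_one [IsDomain A] [Finite σ] (hc : algebraMap R A c ≠ 0)
    (he : ∀ i, algebraMap R A c * φ (X i) = algebraMap R A (e i) * φ (X i₀)) :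
    Nat.card σ ≤ (RingHom.ker φ).height + 1 := by
  suffices h : ∀ s : Set σ, s.Finite →
      ((insert i₀ s).ncard : ℕ∞) ≤ (RingHom.ker (partialEval φ (insert i₀ s))).height + 1 by
    simpa [ker_partialEval_univ] using h Set.univ Set.finite_univ
  intro s hs
  induction s, hs using Set.Finite.induction_on with
  | empty => simp
  | @insert i s _ _ ih =>
    rw [Set.insert_comm]
    by_cases hi : i ∈ insert i₀ s
    · rwa [Set.insert_eq_of_mem hi]
    have hprime (t : Set σ) : (RingHom.ker (partialEval φ t)).IsPrime := RingHom.ker_isPrime _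
    rw [Set.ncard_insert_of_notMem hi]
    push_cast
    gcongr
    exact ih.trans (Ideal.height_add_one_le_of_lt_of_isPrime
      (ker_partialEval_lt_insert φ hc (he i) hi (Set.mem_insert i₀ s)))

end PartialEvaluation

section ReesMap

open MvPolynomial
open scoped HomogeneousIdeal

attribute [local instance] MvPolynomial.gradedAlgebra

variable {σ R : Type*} [CommRing R]

/-- The homomorphism `R[X_i | i ∈ σ] → R[T]` sending `X_i` to `a_i T`. Its image is the Rees algebra
of the ideal generated by the `a_i`. -/
noncomputable def reesMap (a : σ → R) : MvPolynomial σ R →ₐ[R] Polynomial R :=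
  aeval fun i ↦ Polynomial.monomial 1 (a i)

variable (a : σ → R)

@[simp]
theorem reesMap_X (i : σ) : reesMap a (X i) = Polynomial.monomial 1 (a i) :=
  aeval_X _ i

variable {a} in
theorem reesMap_eq_monomial {p : MvPolynomial σ R} {n : ℕ} (hp : p.IsHomogeneous n) :
    reesMap a p = Polynomial.monomial n (eval a p) := by
  rw [reesMap, aeval_def, eval₂_eq, eval_eq, map_sum]
  refine Finset.sum_congr rfl fun u hu ↦ ?_
  rw [hp.degree_eq_sum_deg_support hu]
  simp [← Polynomial.C_mul_X_pow_eq_monomial, mul_pow, Finset.prod_mul_distrib,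
    Finset.prod_pow_eq_pow_sum, mul_assoc]

theorem coeff_reesMap (p : MvPolynomial σ R) (n : ℕ) :
    (reesMap a p).coeff n = eval a (homogeneousComponent n p) := by
  conv_lhs => rw [← sum_homogeneousComponent p]
  simp_rw [map_sum, reesMap_eq_monomial (homogeneousComponent_isHomogeneous _ p),
    Polynomial.finsetSum_coeff, Polynomial.coeff_monomial, Finset.sum_ite_eq', Finset.mem_range]
  split_ifs with hn
  · rfl
  · rw [homogeneousComponent_eq_zero _ _ (by omega), map_zero]

theorem coeff_reesMap_mem_pow (p : MvPolynomial σ R) (n : ℕ) :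
    (reesMap a p).coeff n ∈ Ideal.span (Set.range a) ^ n :=
  (Ideal.mem_span_pow_iff_exists_isHomogeneous a _).mpr
    ⟨_, homogeneousComponent_isHomogeneous n p, (coeff_reesMap a p n).symm⟩

theorem isHomogeneous_ker_reesMap :
    (RingHom.ker (reesMap a)).IsHomogeneous (homogeneousSubmodule σ R) := by
  intro n p hp
  have hcomp : homogeneousComponent n p ∈ RingHom.ker (reesMap a) := by
    rw [RingHom.mem_ker, reesMap_eq_monomial (homogeneousComponent_isHomogeneous n p),
      ← coeff_reesMap, RingHom.mem_ker.mp hp, Polynomial.coeff_zero, map_zero]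
  rwa [← decomposition.decompose'_apply] at hcomp

theorem isHomogeneous_map_C (I : Ideal R) :
    (I.map (C : R →+* MvPolynomial σ R)).IsHomogeneous (homogeneousSubmodule σ R) :=
  Ideal.homogeneous_span _ _ (by rintro _ ⟨r, -, rfl⟩; exact ⟨0, isHomogeneous_C σ r⟩)

theorem mem_pow_idealOfVars_of_isHomogeneous {p : MvPolynomial σ R} {k n : ℕ}
    (hp : p.IsHomogeneous n) (hkn : k ≤ n) : p ∈ idealOfVars σ R ^ k :=
  (mem_pow_idealOfVars_iff' k p).mpr fun _ hu ↦ hp.coeff_eq_zero (hu.trans_le hkn).ne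

theorem idealOfVars_eq_irrelevant :
    idealOfVars σ R = (homogeneousSubmodule σ R)₊.toIdeal := by
  refine le_antisymm (Ideal.span_le.mpr ?_) ((HomogeneousIdeal.toIdeal_irrelevant_le _).mpr ?_)
  · rintro _ ⟨i, rfl⟩
    exact HomogeneousIdeal.mem_irrelevant_of_mem _ one_pos (isHomogeneous_X R i)
  · intro n hn p hp
    simpa using mem_pow_idealOfVars_of_isHomogeneous hp hn

variable {a} in
theorem card_le_height_of_ker_reesMap_le [Finite σ] {Q : Ideal (MvPolynomial σ R)} [Q.IsPrime]
    (hQ : RingHom.ker (reesMap a) ≤ Q) {i : σ} (haQ : C (a i) ∈ Q) (hXQ : X i ∉ Q) :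
    Nat.card σ ≤ Q.height := by
  obtain ⟨q, -, hq, hqQ⟩ := Ideal.exists_ideal_comap_le_prime (f := reesMap a) Q ⊥ hQ
  let p := q.comap (Polynomial.C : R →+* Polynomial R)
  let φ := (Polynomial.mapAlgHom (Ideal.Quotient.mkₐ R p)).comp (reesMap a)
  have hφX (j) : φ (X j) = Polynomial.monomial 1 (Ideal.Quotient.mk p (a j)) := by
    simp [φ]
  have hφq : RingHom.ker φ ≤ q.comap (reesMap a) := by
    intro g hg
    have hcoeff (n) : (reesMap a g).coeff n ∈ p := by
      simpa [φ, Ideal.Quotient.eq_zero_iff_mem] using congr(Polynomial.coeff $hg n)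
    exact Ideal.map_comap_le (f := Polynomial.C) (K := q) (Ideal.mem_map_C_iff.mpr hcoeff)
  have hap : Ideal.Quotient.mk p (a i) ≠ 0 := fun h ↦
    hXQ (hqQ (hφq (by rw [RingHom.mem_ker, hφX, h, map_zero])))
  have hlt : RingHom.ker φ < Q :=
    SetLike.lt_iff_le_and_exists.mpr ⟨hφq.trans hqQ, C (a i), haQ,
      fun h ↦ hap (by simpa [φ] using h)⟩
  have := RingHom.ker_isPrime φ
  have hφi : algebraMap R (Polynomial (R ⧸ p)) (a i) ≠ 0 := by
    simpa
  refine (card_le_height_ker_add_one φ hφi (e := a) (i₀ := i) fun j ↦ ?_).trans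
    (Ideal.height_add_one_le_of_lt_of_isPrime hlt)
  simp [hφX, Polynomial.algebraMap_apply, Polynomial.C_mul_monomial, mul_comm]

variable {a} in
theorem coeff_reesMap_mem_mul_of_mem_map_C {m : Ideal R} {p : MvPolynomial σ R}
    (hp : p ∈ m.map C) (n : ℕ) :
    (reesMap a p).coeff n ∈ m * Ideal.span (Set.range a) ^ n := by
  replace hp : p ∈ m • (⊤ : Submodule R (MvPolynomial σ R)) := by rwa [Ideal.smul_top_eq_map]
  refine Submodule.smul_induction_on hp (fun r hr q _ ↦ ?_) fun p q hp hq ↦ ?_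
  · rw [map_smul, Polynomial.coeff_smul]
    exact Ideal.mul_mem_mul hr (coeff_reesMap_mem_pow a q n)
  · rw [map_add, Polynomial.coeff_add]
    exact add_mem hp hq

variable {ι : Type*} {f : ι → MvPolynomial σ R} {s : ℕ}

theorem coeff_reesMap_mem_mul_of_mem_span (hf : ∀ j, (f j).IsHomogeneous s)
    {p : MvPolynomial σ R} (hp : p ∈ Ideal.span (Set.range f)) (n : ℕ) :
    (reesMap a p).coeff (n + s) ∈
      Ideal.span (Set.range fun j ↦ eval a (f j)) * Ideal.span (Set.range a) ^ n := by
  obtain ⟨c, rfl⟩ := Finsupp.mem_ideal_span_range_iff_exists_finsupp.mp hp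
  rw [Finsupp.sum, map_sum, Polynomial.finsetSum_coeff]
  refine sum_mem fun j _ ↦ ?_
  rw [map_mul, reesMap_eq_monomial (hf j), Polynomial.coeff_mul_monomial]
  exact Ideal.mul_mem_mul_rev (Ideal.subset_span ⟨j, rfl⟩) (coeff_reesMap_mem_pow a (c j) n)

theorem isReductionOf_span_range_eval [Finite σ] {m : Ideal R} (hm : m ≤ Ideal.jacobson ⊥)
    (hs : 0 < s) (hf : ∀ j, (f j).IsHomogeneous s)
    (hrad : idealOfVars σ R ≤
      (m.map C ⊔ RingHom.ker (reesMap a) ⊔ Ideal.span (Set.range f)).radical) :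
    (Ideal.span (Set.range fun j ↦ eval a (f j))).IsReductionOf
      (Ideal.span (Set.range a) ^ s) := by
  have hle : Ideal.span (Set.range fun j ↦ eval a (f j)) ≤ Ideal.span (Set.range a) ^ s := by
    rw [Ideal.span_le]
    rintro _ ⟨j, rfl⟩
    exact (Ideal.mem_span_pow_iff_exists_isHomogeneous a _).mpr ⟨f j, hf j, rfl⟩
  obtain ⟨k, hk⟩ := Ideal.exists_pow_le_of_le_radical_of_fg hrad (idealOfVars_fg σ R)
  refine ⟨hle, k, le_antisymm ?_ ((Ideal.mul_mono_left hle).trans_eq (pow_succ' _ k).symm)⟩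
  rw [← pow_mul, ← pow_mul, mul_add_one]
  refine Submodule.le_of_le_smul_of_le_jacobson_bot
    ((Submodule.fg_span (Set.finite_range a)).pow _) hm fun y hy ↦ ?_
  obtain ⟨p, hp, rfl⟩ := (Ideal.mem_span_pow_iff_exists_isHomogeneous a y).mp hy
  have hpk : p ∈ idealOfVars σ R ^ k :=
    mem_pow_idealOfVars_of_isHomogeneous hp
      ((Nat.le_mul_of_pos_left k hs).trans (Nat.le_add_right _ s))
  obtain ⟨q, hq, g, hg, rfl⟩ := Submodule.mem_sup.mp (hk hpk)
  obtain ⟨u, hu, v, hv, rfl⟩ := Submodule.mem_sup.mp hq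
  have hcoeff := coeff_reesMap a (u + v + g) (s * k + s)
  rw [homogeneousComponent_eq_self hp, map_add, map_add, RingHom.mem_ker.mp hv, add_zero,
    Polynomial.coeff_add] at hcoeff
  rw [← hcoeff, add_comm (Polynomial.coeff _ _)]
  exact Submodule.add_mem_sup (coeff_reesMap_mem_mul_of_mem_span a hf hg _)
    (coeff_reesMap_mem_mul_of_mem_map_C hu _)

variable {a} in
theorem exists_isHomogeneous_idealOfVars_le_radical [IsNoetherianRing R] [IsLocalRing R]
    [Finite σ] {d : ℕ} (hd : ringKrullDim R = d) (ha : ∀ i, a i ∈ IsLocalRing.maximalIdeal R) :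
    ∃ s, 0 < s ∧ ∃ f : Fin d → MvPolynomial σ R, (∀ j, (f j).IsHomogeneous s) ∧
      idealOfVars σ R ≤ ((IsLocalRing.maximalIdeal R).map C ⊔ RingHom.ker (reesMap a) ⊔
        Ideal.span (Set.range f)).radical := by
  have hdim : ringKrullDim (MvPolynomial σ R) ≤ (Nat.card σ + d : ℕ) := by
    rw [ringKrullDim_of_isNoetherianRing, hd]
    exact_mod_cast (add_comm d _).le
  rw [idealOfVars_eq_irrelevant]
  refine exists_homogeneous_irrelevant_le_radical
    ((isHomogeneous_map_C _).sup (isHomogeneous_ker_reesMap a)) hdim fun Q hQ hle hirr ↦ ?_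
  obtain ⟨hMQ, hkerQ⟩ := sup_le_iff.mp hle
  obtain ⟨i, hi⟩ : ∃ i, X i ∉ Q := by
    contrapose! hirr
    rw [← idealOfVars_eq_irrelevant]
    exact Ideal.span_le.mpr (Set.range_subset_iff.mpr hirr)
  exact card_le_height_of_ker_reesMap_le hkerQ (hMQ (Ideal.mem_map_of_mem C (ha i))) hi

end ReesMap

theorem exists_isReductionOf_pow {R : Type*} [CommRing R] [IsNoetherianRing R] [IsLocalRing R]
    {d : ℕ} (hd : ringKrullDim R = d) {I : Ideal R} (hI : I ≠ ⊤) :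
    ∃ s, 1 ≤ s ∧ ∃ x : Fin d → R, (∀ j, x j ∈ I ^ s) ∧
      ∀ t, 1 ≤ t → (Ideal.span (Set.range fun j ↦ x j ^ t)).IsReductionOf (I ^ (s * t)) := by
  obtain ⟨n, a, rfl⟩ := Submodule.fg_iff_exists_fin_generating_family.mp
    (IsNoetherian.noetherian I)
  have ha (i) : a i ∈ IsLocalRing.maximalIdeal R :=
    IsLocalRing.le_maximalIdeal hI (Submodule.subset_span ⟨i, rfl⟩)
  obtain ⟨s, hs, f, hf, hrad⟩ := exists_isHomogeneous_idealOfVars_le_radical hd ha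
  refine ⟨s, hs, fun j ↦ MvPolynomial.eval a (f j), fun j ↦
    (Ideal.mem_span_pow_iff_exists_isHomogeneous a _).mpr ⟨f j, hf j, rfl⟩, fun t ht ↦ ?_⟩
  have hpow : Ideal.span (Set.range f) ≤ (Ideal.span (Set.range fun j ↦ f j ^ t)).radical := by
    rw [Ideal.span_le]
    rintro _ ⟨j, rfl⟩
    exact ⟨t, Ideal.subset_span ⟨j, rfl⟩⟩
  simp_rw [← map_pow]
  refine isReductionOf_span_range_eval a (IsLocalRing.maximalIdeal_le_jacobson ⊥)
    (Nat.mul_pos hs ht) (fun j ↦ (hf j).pow t)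
    (hrad.trans (Ideal.radical_le_radical_iff.mpr (sup_le ?_ ?_)))
  · exact le_sup_left.trans Ideal.le_radical
  · exact hpow.trans (Ideal.radical_mono le_sup_right)

theorem exists_reduction_of_powers_of_normal_primary_ideal_general
    (R : Type*) [CommRing R] [IsNoetherianRing R] [IsLocalRing R]
    (d : ℕ) (hd : ringKrullDim R = d) (I : Ideal R) (hI : I ≠ ⊤) :
    ∀ r : ℕ, 1 ≤ r →
      ∃ s : ℕ, 1 ≤ s ∧ ∃ x : Fin d → R, (∀ i, x i ∈ I ^ (r * s)) ∧
        ∀ t : ℕ, 1 ≤ t →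
          (Ideal.span (Set.range fun i => x i ^ t)).IsReductionOf
            (I ^ (r * s * t)) := by
  intro r hr
  have hIr : I ^ r ≠ ⊤ := fun h ↦
    hI (top_le_iff.mp (h.ge.trans (Ideal.pow_le_self (Nat.ne_of_gt hr))))
  simpa only [mul_assoc, pow_mul] using exists_isReductionOf_pow hd hIr

/-- Let `R` be a `d`-dimensional normal local domain (residue field possibly finite) and
`I` a normal `M`-primary ideal.  For every `r ≥ 1` there exist `s ≥ 1` and elements
`x₁, …, x_d ∈ I^{rs}` such that for every `t ≥ 1` the ideal `(x₁ᵗ, …, x_dᵗ)R` is a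
reduction of `I^{rst}`. -/
theorem exists_reduction_of_powers_of_normal_primary_ideal
    (R : Type*) [CommRing R] [IsDomain R] [IsNoetherianRing R] [IsIntegrallyClosed R]
    [IsLocalRing R] (d : ℕ) (hd : ringKrullDim R = d)
    (I : Ideal R) (hI : I ≠ ⊥) (hIn : I.IsNormalIdeal)
    (hIprim : I.radical = IsLocalRing.maximalIdeal R) :
    ∀ r : ℕ, 1 ≤ r →
      ∃ s : ℕ, 1 ≤ s ∧ ∃ x : Fin d → R, (∀ i, x i ∈ I ^ (r * s)) ∧
        ∀ t : ℕ, 1 ≤ t →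
          (Ideal.span (Set.range fun i => x i ^ t)).IsReductionOf
            (I ^ (r * s * t)) :=
  exists_reduction_of_powers_of_normal_primary_ideal_general R d hd I fun h ↦
    (IsLocalRing.maximalIdeal.isMaximal R).ne_top (by rw [← hIprim, h, Ideal.radical_top])
end

section
/- Let R be a normal noetherian domain and I a nonzero normal nonunit ideal. Then the extended Rees ring Ê = R[Z⁻¹, IZ] is a normal noetherian domain, and its localization at the multiplicative set {1, Z⁻¹, Z⁻², ...} equals R[Z, Z⁻¹]; consequently Ê = R[Z, Z⁻¹] ∩ W'₁ ∩ … ∩ W'_{h'} where W'ⱼ = Ê_{P'ⱼ} are the localizations at the (height one) minimal primes P'ⱼ of Z⁻¹Ê. -/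
/-!
A normal noetherian domain has the Krull property that every associated prime of a nonzero principal
ideal is minimal over it, so divisibility by `x` can be tested at the minimal primes of `x`; applied
to powers of `Z⁻¹` in `Ê`, whose localization away from `Z⁻¹` is `R[Z, Z⁻¹]`, this is the
intersection formula.

Normality of `Ê` is a statement about homogeneous elements. Replacing a Laurent polynomial by the
polynomial, in a new variable, whose coefficients are its homogeneous components shows that the
components of an element of `R[Z, Z⁻¹]` almost integral over `Ê` are again almost integral, hence
integral since `Ê` is noetherian. The component of the right degree of an equation of integral
dependence of `r Zⁿ` over `Ê` is an equation of integral dependence of `r` over the ideal `Iⁿ`.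
-/

section NormalNoetherianDomain

variable {A : Type*} [CommRing A] [IsDomain A] [IsIntegrallyClosed A] {x y : A}

lemma dvd_of_forall_mem_exists_mul_eq_mul {Q : Ideal A} (hQ : Q ≠ ⊥) (hfg : Q.FG) (hx : x ≠ 0)
    (h : ∀ q ∈ Q, ∃ q' ∈ Q, y * q = x * q') : x ∣ y := by
  let K := FractionRing A
  have hinj : Function.Injective (algebraMap A K) := IsFractionRing.injective A K
  have hx' : algebraMap A K x ≠ 0 := by simpa using hx
  let N : Submodule A K := Submodule.map (Algebra.linearMap A K) Q
  have hN : N ≠ ⊥ := by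
    rwa [Ne, ← Submodule.map_bot (Algebra.linearMap A K),
      (Submodule.map_injective_of_injective hinj).eq_iff]
  have hstable : ∀ v ∈ N, (algebraMap A K y / algebraMap A K x) • v ∈ N := by
    rintro _ ⟨q, hq, rfl⟩
    obtain ⟨q', hq', e⟩ := h q hq
    refine ⟨q', hq', ?_⟩
    rw [Algebra.linearMap_apply, Algebra.linearMap_apply, smul_eq_mul, div_mul_eq_mul_div,
      eq_div_iff hx', ← map_mul, ← map_mul, e, mul_comm]
  have hint : IsIntegral A (algebraMap A K y / algebraMap A K x) :=
    isIntegral_of_smul_mem_submodule N hN (Submodule.FG.map _ hfg) _ hstable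
  obtain ⟨c, hc⟩ := IsIntegrallyClosed.isIntegral_iff.mp hint
  exact ⟨c, hinj (by rw [map_mul, hc, mul_div_cancel₀ _ hx'])⟩

variable [IsNoetherianRing A]

lemma colon_singleton_le_of_isPrime_of_le (hx : x ≠ 0) {Q : Ideal A} [hQ : Q.IsPrime] (hQ0 : Q ≠ ⊥)
    (hP : ((Ideal.span {x}).colon {y}).IsPrime) (hQP : Q ≤ (Ideal.span {x}).colon {y}) :
    (Ideal.span {x}).colon {y} ≤ Q := by
  set P := (Ideal.span {x}).colon {y} with hPdef
  have mem_P : ∀ t, t ∈ P ↔ x ∣ y * t := fun t ↦ by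
    rw [hPdef, Submodule.mem_colon_singleton, Ideal.mem_span_singleton, smul_eq_mul, mul_comm]
  have hxy : ¬ x ∣ y := fun hd ↦ (Ideal.ne_top_iff_one P).mp hP.ne_top ((mem_P 1).mpr (by simpa))
  obtain ⟨p, s, hs, hsP⟩ : ∃ p s, y * p = x * s ∧ s ∉ P := by
    by_contra! hstable
    refine hxy (dvd_of_forall_mem_exists_mul_eq_mul (ne_bot_of_le_ne_bot hQ0 hQP)
      (IsNoetherian.noetherian P) hx fun q hq ↦ ?_)
    obtain ⟨t, ht⟩ := (mem_P q).mp hq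
    exact ⟨t, hstable q t ht, ht⟩
  -- `s` is a unit at `P`, so these relations say that `p` generates `P` locally.
  have cross : ∀ {q t}, y * q = x * t → q * s = p * t := fun {q t} ht ↦
    mul_left_cancel₀ hx (by linear_combination (-q) * hs + p * ht)
  by_cases hpQ : p ∈ Q
  · intro q hq
    obtain ⟨t, ht⟩ := (mem_P q).mp hq
    have hqs : q * s ∈ Q := cross ht ▸ Q.mul_mem_right t hpQ
    exact (hQ.mem_or_mem hqs).resolve_right fun h ↦ hsP (hQP h)
  · refine (hxy (dvd_of_forall_mem_exists_mul_eq_mul hQ0 (IsNoetherian.noetherian Q) hx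
      fun q hq ↦ ?_)).elim
    obtain ⟨t, ht⟩ := (mem_P q).mp (hQP hq)
    have hpt : p * t ∈ Q := cross ht ▸ Q.mul_mem_right s hq
    exact ⟨t, (hQ.mem_or_mem hpt).resolve_left hpQ, ht⟩

lemma associatedPrimes_quotient_span_singleton_subset_minimalPrimes (hx : x ≠ 0) :
    associatedPrimes A (A ⧸ Ideal.span {x}) ⊆ (Ideal.span {x}).minimalPrimes := by
  intro P hP
  obtain ⟨hprime, y, hy⟩ := isAssociatedPrime_iff.mp hP
  obtain ⟨y, rfl⟩ := Ideal.Quotient.mk_surjective y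
  obtain rfl : P = (Ideal.span {x}).colon {y} := by
    ext t
    rw [hy, Submodule.mem_colon_singleton, Submodule.mem_colon_singleton, Submodule.mem_bot,
      ← Ideal.Quotient.eq_zero_iff_mem]
    rfl
  refine ⟨⟨hprime, Ideal.le_colon⟩, fun Q ⟨hQ, hxQ⟩ hQP ↦ ?_⟩
  have hQ0 : Q ≠ ⊥ := ne_bot_of_le_ne_bot (by simpa using hx) hxQ
  exact colon_singleton_le_of_isPrime_of_le hx hQ0 hprime hQP

lemma dvd_of_forall_mem_minimalPrimes (hx : x ≠ 0)
    (h : ∀ P ∈ (Ideal.span {x}).minimalPrimes, ∃ b ∉ P, x ∣ y * b) : x ∣ y := by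
  rw [← Ideal.mem_span_singleton, ← Ideal.Quotient.eq_zero_iff_mem]
  by_contra hy
  obtain ⟨P, hP, hle⟩ := exists_le_isAssociatedPrime_of_isNoetherianRing A _ hy
  obtain ⟨b, hbP, hb⟩ :=
    h P (associatedPrimes_quotient_span_singleton_subset_minimalPrimes hx hP)
  refine hbP (hle ?_)
  rw [Submodule.mem_colon_singleton, Submodule.mem_bot, Algebra.smul_def,
    Ideal.Quotient.algebraMap_eq, ← map_mul, Ideal.Quotient.eq_zero_iff_mem,
    Ideal.mem_span_singleton, mul_comm]
  exact hb

lemma mem_range_algebraMap_iff_forall_mem_minimalPrimes {B : Type*} [CommRing B] [Algebra A B]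
    [IsLocalization.Away x B] (hx : x ≠ 0) {f : B} :
    f ∈ Set.range (algebraMap A B) ↔ ∀ P ∈ (Ideal.span {x}).minimalPrimes,
      ∃ a b, b ∉ P ∧ f * algebraMap A B b = algebraMap A B a := by
  have hinj : Function.Injective (algebraMap A B) :=
    IsLocalization.injective B (powers_le_nonZeroDivisors_of_noZeroDivisors hx)
  refine ⟨?_, fun h ↦ ?_⟩
  · rintro ⟨a, rfl⟩ P hP
    exact ⟨a, 1, (Ideal.ne_top_iff_one P).mp hP.1.1.ne_top, by rw [map_one, mul_one]⟩
  obtain ⟨n, g, hg⟩ := IsLocalization.Away.surj x f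
  have hdvd : x ^ n ∣ g := by
    rcases eq_or_ne n 0 with rfl | hn
    · exact ⟨g, by simp⟩
    refine dvd_of_forall_mem_minimalPrimes (pow_ne_zero n hx) fun P hP ↦ ?_
    rw [← Ideal.span_singleton_pow, ← Ideal.radical_minimalPrimes, Ideal.radical_pow _ hn,
      Ideal.radical_minimalPrimes] at hP
    obtain ⟨a, b, hb, hab⟩ := h P hP
    refine ⟨b, hb, a, hinj ?_⟩
    rw [map_mul, map_mul, ← hg, ← hab, map_pow]
    ring
  obtain ⟨a, rfl⟩ := hdvd
  refine ⟨a, ((IsLocalization.Away.algebraMap_isUnit (S := B) x).pow n).mul_right_cancel ?_⟩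
  rw [hg, map_mul, map_pow, mul_comm]

end NormalNoetherianDomain

section HomogeneousComponents

open Polynomial LaurentPolynomial

variable {R : Type*} [CommRing R]

lemma coeff_toLaurent_natCast (p : R[X]) (i : ℕ) : (toLaurent p).coeff (i : ℤ) = p.coeff i :=
  Finsupp.mapDomain_apply Nat.castEmbedding.injective _ i

lemma coeff_mul_C_mul_T (f : R[T;T⁻¹]) (r : R) (k n : ℤ) :
    (f * (LaurentPolynomial.C r * T k)).coeff n = f.coeff (n - k) * r := by
  rw [← single_eq_C_mul_T]
  exact AddMonoidAlgebra.coeff_mul_single_eq_coeff_mul _ fun m _ ↦ by lia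

/-- The regrading of the Laurent polynomial `p * T (-k)`: each monomial of degree `n` is multiplied
by a power of a new variable, shifted by `k` so that the exponents are nonnegative. Its
coefficients are the homogeneous components of `p * T (-k)`. -/
noncomputable def regrading (p : R[X]) (k : ℤ) : R[T;T⁻¹][X] :=
  Polynomial.C (T (-k)) * (p.map LaurentPolynomial.C).comp (Polynomial.C (T 1) * X)

lemma regrading_mul_regrading (p q : R[X]) (k l : ℤ) :
    regrading p k * regrading q l = regrading (p * q) (k + l) := by
  simp only [regrading, Polynomial.map_mul, mul_comp, neg_add, T_add, Polynomial.C_mul]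
  ring

lemma regrading_pow (p : R[X]) (k : ℤ) (m : ℕ) :
    regrading p k ^ m = regrading (p ^ m) (m * k) := by
  simp only [regrading, mul_pow, ← Polynomial.C_pow, T_pow, Polynomial.map_pow, pow_comp, mul_neg]

lemma coeff_regrading {p : R[X]} {f : R[T;T⁻¹]} {k : ℤ} (hp : toLaurent p = f * T k) (i : ℕ) :
    (regrading p k).coeff i = LaurentPolynomial.C (f.coeff (i - k)) * T (i - k) := by
  have hcoeff : p.coeff i = f.coeff (i - k) := by
    simpa [← coeff_toLaurent_natCast, hp] using coeff_mul_C_mul_T f 1 k i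
  rw [regrading, coeff_C_mul, comp_C_mul_X_coeff, coeff_map, T_pow, mul_one, mul_left_comm,
    ← T_add, neg_add_eq_sub, hcoeff]

lemma eval_one_regrading {p : R[X]} {f : R[T;T⁻¹]} {k : ℤ} (hp : toLaurent p = f * T k) :
    (regrading p k).eval 1 = f := by
  have heval : (p.map LaurentPolynomial.C).eval (T 1) = toLaurent p := by
    rw [eval_map, ← coe_eval₂RingHom]
    congr 1
    ext <;> simp
  rw [regrading, eval_mul, eval_C, eval_comp, eval_mul, eval_C, eval_X, mul_one, heval, hp,
    mul_comm, mul_T_assoc, add_neg_cancel, T_zero, mul_one]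

lemma regrading_mem_lifts {A : Subalgebra R R[T;T⁻¹]}
    (hA : ∀ f ∈ A, ∀ n, LaurentPolynomial.C (f.coeff n) * T n ∈ A) {p : R[X]} {f : R[T;T⁻¹]}
    {k : ℤ} (hp : toLaurent p = f * T k) (hf : f ∈ A) :
    regrading p k ∈ Polynomial.lifts (algebraMap A R[T;T⁻¹]) :=
  (lifts_iff_coeff_lifts _).mpr fun i ↦ ⟨⟨_, hA f hf (i - k)⟩, (coeff_regrading hp i).symm⟩

lemma isAlmostIntegral_C_coeff_mul_T [IsDomain R] {A : Subalgebra R R[T;T⁻¹]}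
    (hA : ∀ f ∈ A, ∀ n, LaurentPolynomial.C (f.coeff n) * T n ∈ A) {f : R[T;T⁻¹]}
    (hf : IsAlmostIntegral A f) (n : ℤ) :
    IsAlmostIntegral A (LaurentPolynomial.C (f.coeff n) * T n) := by
  obtain ⟨c, hc, hcf⟩ := hf
  obtain ⟨l, q, hq⟩ := c.1.exists_T_pow
  obtain ⟨k, p, hp, hkn⟩ : ∃ (k : ℕ) (p : R[X]), toLaurent p = f * T k ∧ 0 ≤ n + k := by
    obtain ⟨k, p, hp⟩ := f.exists_T_pow
    refine ⟨k + (-n).toNat, p * X ^ (-n).toNat, ?_, by lia⟩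
    rw [map_mul, hp, toLaurent_X_pow, mul_T_assoc, Nat.cast_add]
  obtain ⟨F, hF⟩ := regrading_mem_lifts hA hq c.2
  have hF0 : F ≠ 0 := by
    rintro rfl
    refine nonZeroDivisors.ne_zero hc (Subtype.ext ?_)
    rw [← eval_one_regrading hq, ← hF, map_zero, eval_zero]
    rfl
  let := Polynomial.algebra A R[T;T⁻¹]
  have hregrading : IsAlmostIntegral A[X] (regrading p k) := by
    refine ⟨F, mem_nonZeroDivisors_of_ne_zero hF0, fun m ↦ ?_⟩
    obtain ⟨g, hg⟩ := hcf m
    have hqp : toLaurent (q * p ^ m) = c.1 * f ^ m * T (l + m * k) := by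
      rw [map_mul, map_pow, hq, hp, mul_pow, T_pow, T_add]
      ring
    have hmem : c.1 * f ^ m ∈ A := (show c.1 * f ^ m = g from hg.symm) ▸ g.2
    obtain ⟨G, hG⟩ := regrading_mem_lifts hA hqp hmem
    refine ⟨G, ?_⟩
    rw [Algebra.smul_def, Polynomial.algebraMap_def, hG, hF, regrading_pow, regrading_mul_regrading]
  have hcoeff := hregrading.coeff (n + k).toNat
  rwa [coeff_regrading hp, Int.toNat_of_nonneg hkn, add_sub_cancel_right] at hcoeff

end HomogeneousComponents

section ExtendedReesAlgebra

open LaurentPolynomial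

variable {R : Type*} [CommRing R]

/-- The extended Rees algebra `R[T⁻¹, IT]` of an ideal `I`, as a subalgebra of `R[T;T⁻¹]`. -/
noncomputable def extendedReesAlgebra (I : Ideal R) : Subalgebra R R[T;T⁻¹] :=
  Algebra.adjoin R ({T (-1)} ∪ (fun a : R ↦ algebraMap R R[T;T⁻¹] a * T 1) '' ↑I)

namespace extendedReesAlgebra

variable (I : Ideal R)

lemma T_neg_one_mem : T (-1) ∈ extendedReesAlgebra I :=
  Algebra.subset_adjoin (Or.inl rfl)

lemma T_neg_one_ne_zero [Nontrivial R] :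
    (⟨T (-1), T_neg_one_mem I⟩ : extendedReesAlgebra I) ≠ 0 :=
  fun h ↦ (isUnit_T (R := R) (-1)).ne_zero (congrArg Subtype.val h)

variable {I}

lemma C_mul_T_mem {a : R} {n : ℤ} (ha : a ∈ I ^ n.toNat) : C a * T n ∈ extendedReesAlgebra I := by
  obtain ⟨m, rfl | rfl⟩ := n.eq_nat_or_neg
  · rw [Int.toNat_natCast] at ha
    induction m generalizing a with
    | zero => simpa using (extendedReesAlgebra I).algebraMap_mem a
    | succ m ih =>
      rw [pow_succ] at ha
      induction ha using Submodule.mul_induction_on' with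
      | mem_mul_mem x hx y hy =>
        have hyT : C y * T 1 ∈ extendedReesAlgebra I := Algebra.subset_adjoin (Or.inr ⟨y, hy, rfl⟩)
        convert mul_mem (ih hx) hyT using 1
        rw [Nat.cast_succ, T_add, map_mul]
        ring
      | add x _ y _ hx hy => rw [map_add, add_mul]; exact add_mem hx hy
  · have hT := pow_mem (T_neg_one_mem I) m
    rw [T_pow, mul_neg_one] at hT
    exact mul_mem ((extendedReesAlgebra I).algebraMap_mem a) hT

lemma coeff_mem {f : R[T;T⁻¹]} (hf : f ∈ extendedReesAlgebra I) (n : ℤ) :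
    f.coeff n ∈ I ^ n.toNat := by
  classical
  induction hf using Algebra.adjoin_induction generalizing n with
  | mem f hf =>
    obtain rfl | ⟨a, ha, rfl⟩ := hf
    · rcases eq_or_ne (-1) n with rfl | hn <;> simp [*]
    · change (C a * T 1).coeff n ∈ _
      rw [← single_eq_C_mul_T, AddMonoidAlgebra.coeff_single]
      rcases eq_or_ne 1 n with rfl | hn
      · simpa using ha
      · simp [hn]
  | algebraMap r =>
    rw [← C_eq_algebraMap]
    rcases eq_or_ne n 0 with rfl | hn <;> simp [*]
  | add f g _ _ hf hg => exact add_mem (hf n) (hg n)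
  | mul f g _ _ hf hg =>
    rw [AddMonoidAlgebra.coeff_mul]
    refine Submodule.sum_mem _ fun i _ ↦ Submodule.sum_mem _ fun j _ ↦ ?_
    dsimp only
    split_ifs with hij
    · refine Ideal.pow_le_pow_right (show n.toNat ≤ i.toNat + j.toNat by lia) ?_
      exact pow_add I _ _ ▸ Ideal.mul_mem_mul (hf i) (hg j)
    · exact zero_mem _

lemma mem_iff {f : R[T;T⁻¹]} :
    f ∈ extendedReesAlgebra I ↔ ∀ n : ℤ, f.coeff n ∈ I ^ n.toNat := by
  refine ⟨coeff_mem, fun hf ↦ ?_⟩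
  rw [← AddMonoidAlgebra.sum_coeff_single f]
  refine sum_mem fun n _ ↦ ?_
  rw [single_eq_C_mul_T]
  exact C_mul_T_mem (hf n)

variable (I)

instance isNoetherianRing [IsNoetherianRing R] : IsNoetherianRing (extendedReesAlgebra I) := by
  classical
  have hspan : ((fun a : R ↦ algebraMap R R[T;T⁻¹] a * T 1) '' ↑I) =
      (Submodule.map (LinearMap.toSpanSingleton R R[T;T⁻¹] (T 1)) I : Set R[T;T⁻¹]) := by
    ext f; simp [Algebra.smul_def]
  obtain ⟨s, hs⟩ := (IsNoetherian.noetherian I).map (LinearMap.toSpanSingleton R R[T;T⁻¹] (T 1))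
  have hfg : (extendedReesAlgebra I).FG := by
    rw [extendedReesAlgebra, Algebra.adjoin_union, hspan, ← hs, Algebra.adjoin_span]
    refine .sup ?_ (Subalgebra.fg_adjoin_finset s)
    simpa using Subalgebra.fg_adjoin_finset {(T (-1) : R[T;T⁻¹])}
  have : Algebra.FiniteType R (extendedReesAlgebra I) := ⟨(extendedReesAlgebra I).fg_top.mpr hfg⟩
  exact Algebra.FiniteType.isNoetherianRing R _

instance isLocalization_away :
    IsLocalization.Away (⟨T (-1), T_neg_one_mem I⟩ : extendedReesAlgebra I) R[T;T⁻¹] := by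
  refine .mk _ (isUnit_T (-1)) (fun f ↦ ?_) fun x y h ↦ ⟨0, ?_⟩
  · obtain ⟨d, hd⟩ := f.coeff.support.bddAbove
    refine ⟨d.toNat, ⟨f * T (-1) ^ d.toNat, mem_iff.mpr fun n ↦ ?_⟩, rfl⟩
    rcases le_or_gt n 0 with hn | hn
    · simp [Int.toNat_of_nonpos hn]
    have hcoeff : f.coeff (n + d.toNat) = 0 :=
      Finsupp.notMem_support_iff.mp fun h ↦ by linarith [hd h, d.self_le_toNat]
    have hshift := coeff_mul_C_mul_T f 1 (d.toNat * -1) n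
    rw [map_one, one_mul, mul_one, mul_neg_one, sub_neg_eq_add, hcoeff] at hshift
    rw [T_pow, mul_neg_one, hshift]
    exact zero_mem _
  · rw [Subtype.ext h]

variable {I}

lemma mem_pow_of_isIntegral_C_mul_T {n : ℕ} (hIn : (I ^ n).IsIntegrallyClosedIdeal) {r : R}
    (hr : IsIntegral (extendedReesAlgebra I) (C r * T (n : ℤ))) : r ∈ I ^ n := by
  nontriviality R
  obtain ⟨p, hp, hroot⟩ := hr
  set N := p.natDegree
  have hNpos : 0 < N := by
    refine Nat.pos_of_ne_zero fun h ↦ ?_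
    simp [hp.natDegree_eq_zero.mp h] at hroot
  let a : ℕ → R := fun i ↦ (p.coeff (N - i)).1.coeff (n * i)
  refine hIn r ⟨N, hNpos, a, fun i _ _ ↦ ?_, ?_⟩
  · rw [← pow_mul]
    exact_mod_cast coeff_mem (p.coeff (N - i)).2 (n * i)
  have hterm : ∀ i ∈ Finset.range (N + 1),
      (algebraMap (extendedReesAlgebra I) R[T;T⁻¹] (p.coeff (N - i)) *
        (C r * T (n : ℤ)) ^ (N - i)).coeff (n * N) = a i * r ^ (N - i) := by
    intro i hi
    rw [mul_pow, ← map_pow, T_pow, coeff_mul_C_mul_T,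
      Nat.cast_sub (Finset.mem_range_succ_iff.mp hi)]
    congr 2
    ring
  have hsum : ∑ i ∈ Finset.range (N + 1), a i * r ^ (N - i) = 0 := by
    rw [Polynomial.eval₂_eq_sum_range, ← Finset.sum_range_reflect] at hroot
    rw [← Finset.sum_congr rfl hterm]
    simpa using congrArg (fun f : R[T;T⁻¹] ↦ f.coeff (n * N)) hroot
  have ha0 : a 0 = 1 := by
    have hlead : p.coeff N = 1 := hp.coeff_natDegree
    simp [a, hlead, ← T_zero]
  rwa [Finset.range_eq_Ico, Finset.sum_eq_sum_Ico_succ_bot N.succ_pos, ha0, one_mul] at hsum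

lemma isIntegrallyClosed [IsDomain R] [IsNoetherianRing R] [IsIntegrallyClosed R]
    (hIn : I.IsNormalIdeal) : IsIntegrallyClosed (extendedReesAlgebra I) := by
  have hL : IsIntegrallyClosed R[T;T⁻¹] :=
    isIntegrallyClosed_of_isLocalization _ (Submonoid.powers (Polynomial.X : Polynomial R))
      (powers_le_nonZeroDivisors_of_noZeroDivisors Polynomial.X_ne_zero)
  have hin : IsIntegrallyClosedIn (extendedReesAlgebra I) R[T;T⁻¹] := by
    refine isIntegrallyClosedIn_iff.mpr ⟨Subtype.val_injective, fun {f} hf ↦ ?_⟩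
    have hf' : IsAlmostIntegral (extendedReesAlgebra I) f :=
      hf.isAlmostIntegral_of_isLocalization (Submonoid.powers ⟨T (-1), T_neg_one_mem I⟩)
        (powers_le_nonZeroDivisors_of_noZeroDivisors (T_neg_one_ne_zero I))
    refine ⟨⟨f, mem_iff.mpr fun n ↦ ?_⟩, rfl⟩
    rcases le_or_gt n 0 with hn | hn
    · simp [Int.toNat_of_nonpos hn]
    lift n to ℕ using hn.le
    have hcomponent : IsAlmostIntegral (extendedReesAlgebra I) (C (f.coeff n) * T (n : ℤ)) :=
      isAlmostIntegral_C_coeff_mul_T (fun g hg m ↦ C_mul_T_mem (coeff_mem hg m)) hf' n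
    exact mem_pow_of_isIntegral_C_mul_T (hIn n (by lia)) hcomponent.isIntegral
  exact .of_isIntegrallyClosed_of_isIntegrallyClosedIn _ R[T;T⁻¹]

end extendedReesAlgebra

end ExtendedReesAlgebra

/-- Let `R` be a normal noetherian domain and `I` a nonzero normal nonunit ideal.  Then
the extended Rees ring `Ê = R[Z⁻¹, IZ] ⊆ R[Z, Z⁻¹]` is a normal noetherian domain; its
localization at `{1, Z⁻¹, Z⁻², …}` equals `R[Z, Z⁻¹]` (every Laurent polynomial becomes
an element of `Ê` after multiplication by a power of `Z⁻¹`); and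
`Ê = R[Z, Z⁻¹] ∩ W'₁ ∩ ⋯ ∩ W'_{h'}` where the `W'ⱼ = Ê_{P'ⱼ}` are the localizations of
`Ê` at the minimal primes `P'ⱼ` of `Z⁻¹Ê`. -/
theorem extended_rees_ring_normal_noetherian_and_intersection
    (R : Type*) [CommRing R] [IsDomain R] [IsNoetherianRing R] [IsIntegrallyClosed R]
    (I : Ideal R) (hI : I ≠ ⊥) (hItop : I ≠ ⊤) (hIn : I.IsNormalIdeal) :
    let Z : LaurentPolynomial R := LaurentPolynomial.T 1
    let Zinv : LaurentPolynomial R := LaurentPolynomial.T (-1)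
    let Ehat : Subalgebra R (LaurentPolynomial R) :=
      Algebra.adjoin R
        ({Zinv} ∪ (fun a : R => algebraMap R (LaurentPolynomial R) a * Z) '' ↑I)
    let zinv : ↥Ehat := ⟨Zinv, Algebra.subset_adjoin (Set.mem_union_left _ rfl)⟩
    -- `Ê` is a normal noetherian domain:
    IsDomain ↥Ehat ∧ IsNoetherianRing ↥Ehat ∧ IsIntegrallyClosed ↥Ehat ∧
    -- `Ê` localized at the powers of `Z⁻¹` is all of `R[Z, Z⁻¹]`:
    (∀ f : LaurentPolynomial R, ∃ n : ℕ, Zinv ^ n * f ∈ Ehat) ∧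
    -- `Ê = R[Z, Z⁻¹] ∩ ⋂ⱼ Ê_{P'ⱼ}`, the intersection over the minimal primes of `Z⁻¹Ê`:
    (∀ f : LaurentPolynomial R,
      f ∈ Ehat ↔
        ∀ P ∈ (Ideal.span {zinv} : Ideal ↥Ehat).minimalPrimes,
          ∃ a b : ↥Ehat, b ∉ P ∧ f * ↑b = ↑a) := by
  intro Z Zinv Ehat zinv
  have hlocalization : IsLocalization.Away zinv (LaurentPolynomial R) :=
    extendedReesAlgebra.isLocalization_away I
  have hzinv : zinv ≠ 0 := extendedReesAlgebra.T_neg_one_ne_zero I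
  have hnoetherian : IsNoetherianRing Ehat := extendedReesAlgebra.isNoetherianRing I
  have hnormal : IsIntegrallyClosed Ehat := extendedReesAlgebra.isIntegrallyClosed hIn
  refine ⟨inferInstance, hnoetherian, hnormal, fun f ↦ ?_, fun f ↦ ?_⟩
  · obtain ⟨n, g, hg⟩ := IsLocalization.Away.surj zinv f
    refine ⟨n, ?_⟩
    rw [mul_comm]
    exact hg ▸ g.2
  · refine Iff.trans ?_ (mem_range_algebraMap_iff_forall_mem_minimalPrimes hzinv)
    exact ⟨fun hf ↦ ⟨⟨f, hf⟩, rfl⟩, fun ⟨g, hg⟩ ↦ hg ▸ g.2⟩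
end

section
/- Let K be a field, m > n > 0 integers with m not divisible by char K, and f₁,…,fₙ pairwise coprime homogeneous linear forms in K[X,Y]. Then g = Zᵐ − f₁(X,Y)⋯fₙ(X,Y) is irreducible in K[X,Y,Z]. -/
/-!
Regard `Zᵐ − f₁ ⋯ fₙ` as a monic polynomial in `Z` over the ring in the remaining variables.
A linear form over a field is prime, so `f₁` divides the constant term, and it does so exactly once
because no other factor is associated to it. Hence the polynomial is Eisenstein at `(f₁)`.
-/

theorem not_sq_dvd_prod_of_not_associated {M ι : Type*} [CommMonoidWithZero M] [IsCancelMulZero M]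
    {s : Finset ι} {f : ι → M} (hf : ∀ j ∈ s, Prime (f j)) {i : ι} (hi : i ∈ s)
    (hcop : ∀ j ∈ s, i ≠ j → ¬ Associated (f i) (f j)) :
    ¬ f i ^ 2 ∣ ∏ j ∈ s, f j := by
  classical
  rw [← Finset.mul_prod_erase s f hi, sq, mul_dvd_mul_iff_left (hf i hi).ne_zero,
    (hf i hi).dvd_finsetProd_iff]
  rintro ⟨j, hj, hij⟩
  obtain ⟨hji, hjs⟩ := Finset.mem_erase.mp hj
  exact hcop j hjs hji.symm ((hf i hi).associated_of_dvd (hf j hjs) hij)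

section Eisenstein

open Polynomial

theorem irreducible_X_pow_sub_C_of_prime_dvd {R : Type*} [CommRing R] [IsDomain R] {π a : R}
    (hπ : Prime π) (hdvd : π ∣ a) (hsq : ¬ π ^ 2 ∣ a) {m : ℕ} (hm : m ≠ 0) :
    Irreducible (X ^ m - C a : R[X]) := by
  have hprime : (Ideal.span {π}).IsPrime := (Ideal.span_singleton_prime hπ.ne_zero).mpr hπ
  have hmonic : (X ^ m - C a : R[X]).Monic := monic_X_pow_sub_C a hm
  have hcoeff_zero : (X ^ m - C a : R[X]).coeff 0 = -a := by simp [hm.symm]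
  have hcoeff_mem : ∀ {k}, k < (X ^ m - C a : R[X]).natDegree →
      (X ^ m - C a : R[X]).coeff k ∈ Ideal.span {π} := by
    intro k hk
    rw [natDegree_X_pow_sub_C] at hk
    rcases eq_or_ne k 0 with rfl | hk0
    · rwa [hcoeff_zero, neg_mem_iff, Ideal.mem_span_singleton]
    · simp [coeff_X_pow, coeff_C, hk.ne, hk0]
  have heisenstein : (X ^ m - C a : R[X]).IsEisensteinAt (Ideal.span {π}) :=
    hmonic.isEisensteinAt_of_mem_of_notMem hprime.ne_top hcoeff_mem <| by
      rwa [hcoeff_zero, neg_mem_iff, Ideal.span_singleton_pow, Ideal.mem_span_singleton]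
  exact heisenstein.irreducible hprime hmonic.isPrimitive <| by
    rw [natDegree_X_pow_sub_C]
    exact Nat.pos_of_ne_zero hm

end Eisenstein

section MvPolynomial

open MvPolynomial

theorem irreducible_of_totalDegree_eq_one_of_field {σ K : Type*} [Field K] {p : MvPolynomial σ K}
    (hp : p.totalDegree = 1) : Irreducible p := by
  refine irreducible_of_totalDegree_eq_one hp fun c hc ↦ isUnit_iff_ne_zero.mpr ?_
  rintro rfl
  have hp0 : p = 0 := by
    ext d
    exact zero_dvd_iff.mp (hc d)
  simp [hp0] at hp

theorem optionEquivLeft_rename_some {σ R : Type*} [CommSemiring R] (p : MvPolynomial σ R) :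
    optionEquivLeft R σ (rename some p) = Polynomial.C p := by
  have hcomp : (optionEquivLeft R σ).toAlgHom.comp (rename some) = Polynomial.CAlgHom := by
    ext; simp
  exact DFunLike.congr_fun hcomp p

variable {R σ τ : Type*} [CommRing R] [IsDomain R]

theorem irreducible_X_pow_sub_rename_of_prime_dvd (e : Option σ ≃ τ) {π p : MvPolynomial σ R}
    (hπ : Prime π) (hdvd : π ∣ p) (hsq : ¬ π ^ 2 ∣ p) {m : ℕ} (hm : m ≠ 0) :
    Irreducible (X (e none) ^ m - rename (e ∘ some) p : MvPolynomial τ R) := by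
  have hirr : Irreducible (X none ^ m - rename some p : MvPolynomial (Option σ) R) := by
    rw [← MulEquiv.irreducible_iff (optionEquivLeft R σ), map_sub, map_pow,
      optionEquivLeft_X_none, optionEquivLeft_rename_some]
    exact irreducible_X_pow_sub_C_of_prime_dvd hπ hdvd hsq hm
  simpa [rename_rename] using hirr.map (renameEquiv R e)

theorem irreducible_pow_sub_product_of_linear_forms_general {ι : Type*} [Fintype ι] [Nonempty ι]
    (e : Option σ ≃ τ) {m : ℕ} (hm : m ≠ 0) {f : ι → MvPolynomial σ R} (hf : ∀ i, Prime (f i))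
    (hcop : Pairwise fun i j ↦ ¬ Associated (f i) (f j)) :
    Irreducible (X (e none) ^ m - ∏ i, rename (e ∘ some) (f i) : MvPolynomial τ R) := by
  obtain ⟨i⟩ := ‹Nonempty ι›
  rw [← map_prod]
  exact irreducible_X_pow_sub_rename_of_prime_dvd e (hf i)
    (Finset.dvd_prod_of_mem f (Finset.mem_univ i))
    (not_sq_dvd_prod_of_not_associated (fun j _ ↦ hf j) (Finset.mem_univ i)
      fun _ _ hij ↦ hcop hij) hm

end MvPolynomial

/-- Let `K` be a field, `m > n > 0` integers with `char K ∤ m`, and `f₁, …, fₙ` pairwise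
coprime (i.e. pairwise non-associated) homogeneous linear forms in `K[X,Y]`.  Then
`g = Zᵐ − f₁(X,Y) ⋯ fₙ(X,Y)` is irreducible in `K[X,Y,Z]`. -/
theorem irreducible_pow_sub_product_of_linear_forms
    (K : Type*) [Field K] (m n : ℕ) (hn : 0 < n) (hmn : n < m)
    (hchar : ¬ (ringChar K ∣ m))
    (f : Fin n → MvPolynomial (Fin 2) K)
    (hhom : ∀ i, (f i).IsHomogeneous 1)
    (hne : ∀ i, f i ≠ 0)
    (hcop : ∀ i j, i ≠ j → ¬ Associated (f i) (f j)) :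
    Irreducible
      ((MvPolynomial.X (2 : Fin 3)) ^ m -
        ∏ i, MvPolynomial.rename (Fin.castSucc : Fin 2 → Fin 3) (f i)) := by
  have : NeZero n := ⟨hn.ne'⟩
  have hprime (i : Fin n) : Prime (f i) :=
    (irreducible_of_totalDegree_eq_one_of_field ((hhom i).totalDegree (hne i))).prime
  have hsome : finSuccEquivLast.symm ∘ some = (Fin.castSucc : Fin 2 → Fin 3) :=
    funext finSuccEquivLast_symm_some
  exact hsome ▸ irreducible_pow_sub_product_of_linear_forms_general finSuccEquivLast.symm
    (hn.trans hmn).ne' hprime hcop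
end
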